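/- Let m ≥ 2 be an integer and let Alt be the real vector space of alternating complex 2m×2m matrices (Aᵀ = −A), of real dimension 2m(2m−1). SU(2m) acts on Alt by g·A = g A gᵀ. For A ∈ Alt let S(A) = {X ∈ 𝔰𝔲(2m) : X·A + A·Xᵀ = 0} and T(A) = {X·A + A·Xᵀ : X ∈ 𝔰𝔲(2m)}. Then the minimum over all A ∈ Alt of dim_ℝ S(A) equals 3m, and the maximum over all A ∈ Alt of dim_ℝ T(A) equals 2m(2m−1) − (m+1). Equivalently, the representation of SU(2m) on Λ²ℂ²ᵐ has cohomogeneity m+1; in particular, for m = 5, 6, 7 (i.e. SU(10), SU(12), SU(14)) it has cohomogeneity 6, 7, 8 respectively. -/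

import Mathlib

/-!
By rank-nullity both claims amount to `min dim S(A) = 3m`, and the two inequalities come from a
normal form for alternating matrices under `A ↦ U A Uᵀ`, `U` unitary.

Fix a block-diagonal alternating `D` with real `2 × 2` blocks `dᵢ J` and distinct `dᵢ²`. By
compactness the unitary orbit of `A` contains a point maximizing `Re tr (D ·)`, and criticality of
that point forces `A D` to be Hermitian, that is, `A D = D Ā`. Hence `A` commutes with `D²`, which
is diagonal with eigenvalues `-dᵢ²`, and so `A` is block diagonal with blocks `aᵢ J`. Since
`X J + J Xᵀ = tr(X) J` for `2 × 2` matrices, its stabilizer contains `𝔰𝔲(2)ᵐ`, of dimension `3m`.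
When `A = D` the relation `X D = D X̄` holds for every `X` in the stabilizer; the same
commutation argument then shows that the stabilizer is exactly `𝔰𝔲(2)ᵐ`.
-/

open Matrix

/-- `S(A) = {X ∈ 𝔰𝔲(2m) : X·A + A·Xᵀ = 0}` (traceless skew-Hermitian matrices). -/
def stabSet19 {m : ℕ} (A : Matrix (Fin (2 * m)) (Fin (2 * m)) ℂ) :
    Set (Matrix (Fin (2 * m)) (Fin (2 * m)) ℂ) :=
  {X | Xᴴ = -X ∧ X.trace = 0 ∧ X * A + A * Xᵀ = 0}

/-- `T(A) = {X·A + A·Xᵀ : X ∈ 𝔰𝔲(2m)}`. -/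
def tangSet19 {m : ℕ} (A : Matrix (Fin (2 * m)) (Fin (2 * m)) ℂ) :
    Set (Matrix (Fin (2 * m)) (Fin (2 * m)) ℂ) :=
  {B | ∃ X : Matrix (Fin (2 * m)) (Fin (2 * m)) ℂ,
    Xᴴ = -X ∧ X.trace = 0 ∧ B = X * A + A * Xᵀ}

section Dimension

theorem finrank_map_add_finrank_inf_ker {K V W : Type*} [DivisionRing K] [AddCommGroup V]
    [Module K V] [FiniteDimensional K V] [AddCommGroup W] [Module K W]
    (p : Submodule K V) (f : V →ₗ[K] W) :
    Module.finrank K (p.map f) + Module.finrank K (p ⊓ f.ker : Submodule K V) =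
      Module.finrank K p := by
  rw [← LinearMap.finrank_range_add_finrank_ker (f.domRestrict p), LinearMap.range_domRestrict,
    LinearMap.ker_domRestrict, ← Submodule.map_comap_subtype, Submodule.finrank_map_subtype_eq]

theorem finrank_skewAdjoint (E : Type*) [AddCommGroup E] [Module ℂ E] [StarAddMonoid E]
    [StarModule ℂ E] [FiniteDimensional ℂ E] :
    Module.finrank ℝ (skewAdjoint.submodule ℝ E) = Module.finrank ℂ E := by
  have : FiniteDimensional ℝ E := FiniteDimensional.complexToReal E
  have negI_bijective :
      Function.Bijective (skewAdjoint.negISMul : skewAdjoint E →ₗ[ℝ] selfAdjoint E) := by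
    refine ⟨fun x y hxy => Subtype.ext ?_, fun y => ⟨⟨Complex.I • (y : E), ?_⟩, ?_⟩⟩
    · rw [← skewAdjoint.I_smul_neg_I x, hxy, skewAdjoint.I_smul_neg_I]
    · exact Complex.I_smul_mem_skewAdjoint_iff_isSelfAdjoint.mpr y.2
    · exact Subtype.ext (by simp [skewAdjoint.negISMul, smul_smul])
  have finrank_eq : Module.finrank ℝ (skewAdjoint.submodule ℝ E) =
      Module.finrank ℝ (selfAdjoint.submodule ℝ E) :=
    (LinearEquiv.ofBijective _ negI_bijective).finrank_eq
  have finrank_add : Module.finrank ℝ E = Module.finrank ℝ (selfAdjoint.submodule ℝ E) +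
      Module.finrank ℝ (skewAdjoint.submodule ℝ E) :=
    (StarModule.decomposeProdAdjoint ℝ E).finrank_eq.trans
      (Module.finrank_prod (R := ℝ) (M := selfAdjoint.submodule ℝ E)
        (M' := skewAdjoint.submodule ℝ E))
  have := finrank_real_of_complex E
  omega

end Dimension

section Action

variable {n p : Type*} [Fintype n] [Fintype p]

variable (n) in
/-- The Lie algebra `𝔰𝔲(n)` of traceless skew-Hermitian matrices, as a real vector space. -/
noncomputable def su : Submodule ℝ (Matrix n n ℂ) :=
  skewAdjoint.submodule ℝ (Matrix n n ℂ) ⊓ (traceLinearMap n ℝ ℂ).ker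

theorem mem_su {X : Matrix n n ℂ} : X ∈ su n ↔ Xᴴ = -X ∧ X.trace = 0 := Iff.rfl

theorem finrank_su_add_one [Nonempty n] :
    Module.finrank ℝ (su n) + 1 = Fintype.card n ^ 2 := by
  classical
  have map_trace : (skewAdjoint.submodule ℝ (Matrix n n ℂ)).map (traceLinearMap n ℝ ℂ) =
      skewAdjoint.submodule ℝ ℂ := by
    obtain ⟨i⟩ := ‹Nonempty n›
    refine le_antisymm (Submodule.map_le_iff_le_comap.mpr fun X hX => ?_) fun z hz => ?_
    · exact (trace_conjTranspose X).symm.trans ((congrArg trace hX).trans (trace_neg X))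
    · refine ⟨single i i z, ?_, trace_single_eq_same i z⟩
      exact (conjTranspose_single i i z).trans
        ((congrArg (single i i) hz).trans (single_neg i i z).symm)
  have := finrank_map_add_finrank_inf_ker (skewAdjoint.submodule ℝ (Matrix n n ℂ))
    (traceLinearMap n ℝ ℂ)
  rw [map_trace, finrank_skewAdjoint, finrank_skewAdjoint, Module.finrank_self,
    Module.finrank_matrix, Module.finrank_self, mul_one, ← pow_two] at this
  rw [su]
  omega

/-- The map `X ↦ X A + A Xᵀ`, the derivative at the identity of `g ↦ g A gᵀ`. -/
noncomputable def congrAction (A : Matrix n n ℂ) : Matrix n n ℂ →ₗ[ℝ] Matrix n n ℂ :=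
  LinearMap.mulRight ℝ A +
    LinearMap.mulLeft ℝ A ∘ₗ (transposeLinearEquiv n n ℝ ℂ).toLinearMap

theorem congrAction_apply (A X : Matrix n n ℂ) : congrAction A X = X * A + A * Xᵀ := rfl

/-- The infinitesimal stabilizer `S(A)` of `A` in `𝔰𝔲(n)` for the action `g ↦ g A gᵀ`. -/
noncomputable def congrStabilizer (A : Matrix n n ℂ) : Submodule ℝ (Matrix n n ℂ) :=
  su n ⊓ (congrAction A).ker

theorem mem_congrStabilizer {A X : Matrix n n ℂ} :
    X ∈ congrStabilizer A ↔ X ∈ su n ∧ congrAction A X = 0 := Iff.rfl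

/-- The tangent space `T(A)` at `A` to its orbit for the action `g ↦ g A gᵀ` of `SU(n)`. -/
noncomputable def congrTangent (A : Matrix n n ℂ) : Submodule ℝ (Matrix n n ℂ) :=
  (su n).map (congrAction A)

theorem finrank_congrTangent_add_finrank_congrStabilizer [Nonempty n] (A : Matrix n n ℂ) :
    Module.finrank ℝ (congrTangent A) + Module.finrank ℝ (congrStabilizer A) + 1 =
      Fintype.card n ^ 2 := by
  rw [congrTangent, congrStabilizer, finrank_map_add_finrank_inf_ker, finrank_su_add_one]

theorem conj_mem_congrStabilizer [DecidableEq n] [DecidableEq p] {V : Matrix p n ℂ}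
    (hV : Vᴴ * V = 1) (hV' : V * Vᴴ = 1) {A : Matrix n n ℂ} {X : Matrix p p ℂ}
    (hX : X ∈ congrStabilizer (V * A * Vᵀ)) : Vᴴ * X * V ∈ congrStabilizer A := by
  obtain ⟨hsu, hact⟩ := mem_congrStabilizer.mp hX
  obtain ⟨hskew, htrace⟩ := mem_su.mp hsu
  have hVt : Vᵀ * Vᴴᵀ = 1 := by rw [← transpose_mul, hV, transpose_one]
  refine mem_congrStabilizer.mpr ⟨mem_su.mpr ⟨?_, ?_⟩, ?_⟩
  · rw [conjTranspose_mul, conjTranspose_mul, conjTranspose_conjTranspose, hskew,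
      Matrix.neg_mul, Matrix.mul_neg, Matrix.mul_assoc]
  · rw [trace_mul_cycle, hV', Matrix.one_mul, htrace]
  · calc congrAction A (Vᴴ * X * V)
        = Vᴴ * X * V * A * (Vᵀ * Vᴴᵀ) + (Vᴴ * V) * A * (Vᵀ * Xᵀ * Vᴴᵀ) := by
          rw [congrAction_apply, hV, hVt, Matrix.mul_one, Matrix.one_mul, transpose_mul,
            transpose_mul, Matrix.mul_assoc, Matrix.mul_assoc Vᵀ]
      _ = Vᴴ * congrAction (V * A * Vᵀ) X * Vᴴᵀ := by
          simp only [congrAction_apply, Matrix.mul_add, Matrix.add_mul, Matrix.mul_assoc]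
      _ = 0 := by rw [hact, Matrix.mul_zero, Matrix.zero_mul]

theorem finrank_congrStabilizer_conj_le [DecidableEq n] [DecidableEq p] {V : Matrix p n ℂ}
    (hV : Vᴴ * V = 1) (hV' : V * Vᴴ = 1) (A : Matrix n n ℂ) :
    Module.finrank ℝ (congrStabilizer (V * A * Vᵀ)) ≤ Module.finrank ℝ (congrStabilizer A) := by
  let conj : Matrix p p ℂ →ₗ[ℝ] Matrix n n ℂ := mulRightLinearMap n ℝ V ∘ₗ mulLeftLinearMap p ℝ Vᴴ
  have conj_injective : Function.Injective conj := by
    refine Function.LeftInverse.injective (g := fun Y => V * Y * Vᴴ) fun X => ?_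
    change V * (Vᴴ * X * V) * Vᴴ = X
    rw [Matrix.mul_assoc, Matrix.mul_assoc, hV', ← Matrix.mul_assoc, ← Matrix.mul_assoc, hV',
      Matrix.one_mul, Matrix.mul_one]
  rw [(Submodule.equivMapOfInjective conj conj_injective _).finrank_eq]
  refine Submodule.finrank_mono (Submodule.map_le_iff_le_comap.mpr fun X hX => ?_)
  exact conj_mem_congrStabilizer hV hV' hX

theorem finrank_congrStabilizer_submatrix_le (A : Matrix n n ℂ) (e : p ≃ n) :
    Module.finrank ℝ (congrStabilizer (A.submatrix e e)) ≤
      Module.finrank ℝ (congrStabilizer A) := by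
  classical
  let V : Matrix p n ℂ := (1 : Matrix n n ℂ).submatrix e id
  have hVh : Vᴴ = (1 : Matrix n n ℂ).submatrix id e := by
    rw [conjTranspose_submatrix, conjTranspose_one]
  have hV : Vᴴ * V = 1 := by
    rw [hVh, submatrix_mul_equiv, Matrix.one_mul, submatrix_id_id]
  have hV' : V * Vᴴ = 1 := by
    rw [hVh, ← submatrix_mul _ _ e id e Function.bijective_id, Matrix.one_mul, submatrix_one_equiv]
  have hconj : V * A * Vᵀ = A.submatrix e e := by
    rw [transpose_submatrix, transpose_one, ← submatrix_id_id A,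
      ← submatrix_mul _ _ e id id Function.bijective_id, Matrix.one_mul,
      ← submatrix_mul _ _ e id e Function.bijective_id, Matrix.mul_one, submatrix_id_id]
  exact hconj ▸ finrank_congrStabilizer_conj_le hV hV' A

end Action

section Critical

variable {n : Type*} [Fintype n]

section UnitaryOrbit

variable [DecidableEq n]

theorem isCompact_unitaryGroup (𝕜 : Type*) [RCLike 𝕜] :
    IsCompact (unitaryGroup n 𝕜 : Set (Matrix n n 𝕜)) := by
  have hcompact : IsCompact (X := Matrix n n 𝕜) (Set.univ.pi fun _ => Set.univ.pi fun _ =>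
      Metric.closedBall 0 1) :=
    isCompact_univ_pi fun _ => isCompact_univ_pi fun _ => isCompact_closedBall _ _
  refine hcompact.of_isClosed_subset isClosed_unitary fun U hU i _ j _ => ?_
  exact mem_closedBall_zero_iff.mpr (entry_norm_bound_of_unitary hU i j)

theorem exists_isMaxOn_re_trace_mul_conj (B A : Matrix n n ℂ) :
    ∃ U ∈ unitaryGroup n ℂ,
      IsMaxOn (fun V => (trace (B * (V * A * Vᵀ))).re) (unitaryGroup n ℂ) U :=
  (isCompact_unitaryGroup ℂ).exists_isMaxOn ⟨1, one_mem _⟩ (by fun_prop)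

open scoped Matrix.Norms.L2Operator in
theorem hasDerivAt_exp_smul_mul_mul_transpose (A X : Matrix n n ℂ) :
    HasDerivAt (fun t : ℝ => NormedSpace.exp (t • X) * A * (NormedSpace.exp (t • X))ᵀ)
      (congrAction A X) 0 := by
  have htranspose (t : ℝ) : (NormedSpace.exp (t • X))ᵀ = NormedSpace.exp (t • Xᵀ) := by
    rw [← exp_transpose, transpose_smul]
  simp only [htranspose]
  refine (((hasDerivAt_exp_smul_const X (0 : ℝ)).mul_const A).mul
    (hasDerivAt_exp_smul_const Xᵀ (0 : ℝ))).congr_deriv ?_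
  simp [congrAction_apply]

open scoped Matrix.Norms.L2Operator in
theorem exp_smul_mem_unitaryGroup {X : Matrix n n ℂ} (hX : X ∈ skewAdjoint (Matrix n n ℂ)) (t : ℝ) :
    NormedSpace.exp (t • X) ∈ unitaryGroup n ℂ := by
  let +nondep : NormedAlgebra ℚ (Matrix n n ℂ) := .restrictScalars ℚ ℂ _
  exact NormedSpace.exp_mem_unitary_of_mem_skewAdjoint (skewAdjoint.smul_mem t hX)

open scoped Matrix.Norms.L2Operator in
theorem re_trace_mul_congrAction_eq_zero_of_isMaxOn {B A X : Matrix n n ℂ}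
    (hmax : IsMaxOn (fun V => (trace (B * (V * A * Vᵀ))).re) (unitaryGroup n ℂ) 1)
    (hX : X ∈ skewAdjoint (Matrix n n ℂ)) : (trace (B * congrAction A X)).re = 0 := by
  let L : Matrix n n ℂ →ₗ[ℝ] ℝ :=
    Complex.reLm ∘ₗ traceLinearMap n ℝ ℂ ∘ₗ LinearMap.mulLeft ℝ B
  have hderiv := L.toContinuousLinearMap.hasFDerivAt.comp_hasDerivAt (0 : ℝ)
    (hasDerivAt_exp_smul_mul_mul_transpose A X)
  refine IsLocalMax.hasDerivAt_eq_zero (Filter.Eventually.of_forall fun t => ?_) hderiv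
  simpa [L] using hmax (exp_smul_mem_unitaryGroup hX t)

end UnitaryOrbit

open scoped ComplexOrder in
theorem isHermitian_of_re_trace_mul_skewAdjoint_eq_zero {M : Matrix n n ℂ}
    (hM : ∀ X ∈ skewAdjoint (Matrix n n ℂ), (trace (X * M)).re = 0) : M.IsHermitian := by
  have hskew : (M - Mᴴ)ᴴ = -(M - Mᴴ) := by
    rw [conjTranspose_sub, conjTranspose_conjTranspose, neg_sub]
  have hstar : trace ((M - Mᴴ) * Mᴴ) = -star (trace ((M - Mᴴ) * M)) := by
    rw [← trace_conjTranspose, conjTranspose_mul, hskew, Matrix.mul_neg, trace_neg, neg_neg,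
      trace_mul_comm]
  have hre : (trace ((M - Mᴴ) * (M - Mᴴ)ᴴ)).re = 0 := by
    rw [hskew, Matrix.mul_neg, Matrix.mul_sub, trace_neg, trace_sub, hstar]
    simp [hM _ hskew]
  have hreal : 0 ≤ trace ((M - Mᴴ) * (M - Mᴴ)ᴴ) :=
    (posSemidef_self_mul_conjTranspose _).trace_nonneg
  have htrace : trace ((M - Mᴴ) * (M - Mᴴ)ᴴ) = 0 :=
    Complex.ext hre (Complex.nonneg_iff.mp hreal).2.symm
  exact (sub_eq_zero.mp (trace_mul_conjTranspose_self_eq_zero_iff.mp htrace)).symm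

theorem isHermitian_mul_of_isMaxOn [DecidableEq n] {B A : Matrix n n ℂ}
    (hB : Bᵀ = -B) (hA : Aᵀ = -A)
    (hmax : IsMaxOn (fun V => (trace (B * (V * A * Vᵀ))).re) (unitaryGroup n ℂ) 1) :
    (A * B).IsHermitian := by
  refine isHermitian_of_re_trace_mul_skewAdjoint_eq_zero fun X hX => ?_
  have htranspose : trace (B * (A * Xᵀ)) = trace (X * (A * B)) := by
    rw [← trace_transpose, transpose_mul, transpose_mul, transpose_transpose, hB, hA]
    simp [Matrix.mul_assoc]
  have hcyclic : trace (B * (X * A)) = trace (X * (A * B)) := by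
    rw [trace_mul_comm, Matrix.mul_assoc]
  have hcrit := re_trace_mul_congrAction_eq_zero_of_isMaxOn hmax hX
  rw [congrAction_apply, Matrix.mul_add, trace_add, hcyclic, htranspose, Complex.add_re] at hcrit
  linarith

end Critical

section Commutation

variable {n : Type*} [Fintype n]

theorem apply_eq_zero_of_commute_diagonal {R : Type*} [CommRing R] [IsDomain R]
    [DecidableEq n] {Y : Matrix n n R} {c : n → R} (hY : Commute Y (diagonal c)) {p q : n}
    (hpq : c p ≠ c q) : Y p q = 0 := by
  have hentry : Y p q * c q = c p * Y p q := by
    simpa only [mul_diagonal, diagonal_mul] using congrFun₂ hY.eq p q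
  have : (c p - c q) * Y p q = 0 := by linear_combination -hentry
  exact (mul_eq_zero.mp this).resolve_left (sub_ne_zero.mpr hpq)

theorem mul_eq_mul_map_conj_of_isHermitian_mul {D A : Matrix n n ℂ}
    (hDalt : Dᵀ = -D) (hDreal : D.map (starRingEnd ℂ) = D) (hA : Aᵀ = -A)
    (hAD : (A * D).IsHermitian) : A * D = D * A.map (starRingEnd ℂ) := by
  have hDh : Dᴴ = -D := (congrArg transpose hDreal).trans hDalt
  have hAh : Aᴴ = -A.map (starRingEnd ℂ) :=
    (congrArg (fun M => M.map (starRingEnd ℂ)) hA).trans (Matrix.map_neg _ (map_neg _) A)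
  rw [← hAD.eq, conjTranspose_mul, hDh, hAh, Matrix.neg_mul, Matrix.mul_neg, neg_neg]

theorem commute_mul_self_of_mul_eq_mul_map_conj {D Y : Matrix n n ℂ}
    (hD : D.map (starRingEnd ℂ) = D) (hY : Y * D = D * Y.map (starRingEnd ℂ)) :
    Commute Y (D * D) := by
  have hconj : Y.map (starRingEnd ℂ) * D = D * Y := by
    calc Y.map (starRingEnd ℂ) * D = (Y * D).map (starRingEnd ℂ) := by rw [Matrix.map_mul, hD]
      _ = D * (Y.map (starRingEnd ℂ)).map (starRingEnd ℂ) := by rw [hY, Matrix.map_mul, hD]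
      _ = D * Y := by ext; simp [mul_apply]
  calc Y * (D * D) = D * (Y.map (starRingEnd ℂ) * D) := by
        rw [← Matrix.mul_assoc, hY, Matrix.mul_assoc]
    _ = D * D * Y := by rw [hconj, Matrix.mul_assoc]

end Commutation

section SymplecticBlocks

/-- The standard alternating `2 × 2` matrix. -/
def symplecticUnit : Matrix (Fin 2) (Fin 2) ℂ := !![0, 1; -1, 0]

theorem transpose_symplecticUnit : symplecticUnitᵀ = -symplecticUnit := by
  ext s t
  fin_cases s <;> fin_cases t <;> simp [symplecticUnit]

theorem symplecticUnit_mul_self : symplecticUnit * symplecticUnit = -1 := by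
  ext s t
  fin_cases s <;> fin_cases t <;> simp [symplecticUnit]

theorem congrAction_symplecticUnit (X : Matrix (Fin 2) (Fin 2) ℂ) :
    congrAction symplecticUnit X = X.trace • symplecticUnit := by
  rw [congrAction_apply]
  ext s t
  rw [Matrix.add_apply, mul_apply, mul_apply]
  fin_cases s <;> fin_cases t <;> simp [symplecticUnit, trace_fin_two, add_comm]

theorem eq_smul_symplecticUnit {B : Matrix (Fin 2) (Fin 2) ℂ} (hB : Bᵀ = -B) :
    B = B 0 1 • symplecticUnit := by
  have hentry (s t : Fin 2) : B t s = -B s t := congrFun (congrFun hB s) t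
  ext s t
  fin_cases s <;> fin_cases t
  · simpa [symplecticUnit] using self_eq_neg.mp (hentry 0 0)
  · simp [symplecticUnit]
  · simpa [symplecticUnit] using hentry 0 1
  · simpa [symplecticUnit] using self_eq_neg.mp (hentry 1 1)

variable {ι : Type*} [DecidableEq ι]

/-- The block-diagonal alternating matrix with `2 × 2` blocks `aᵢ J`, where `J` is
`symplecticUnit`: the normal form of an alternating matrix under unitary congruence. -/
def symplecticBlocks (a : ι → ℂ) : Matrix (Fin 2 × ι) (Fin 2 × ι) ℂ :=
  blockDiagonal fun i => a i • symplecticUnit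

theorem transpose_symplecticBlocks (a : ι → ℂ) :
    (symplecticBlocks a)ᵀ = -symplecticBlocks a := by
  rw [symplecticBlocks, blockDiagonal_transpose, ← blockDiagonal_neg]
  simp only [transpose_smul, transpose_symplecticUnit, smul_neg]
  rfl

theorem map_conj_symplecticBlocks_ofReal (d : ι → ℝ) :
    (symplecticBlocks fun i => (d i : ℂ)).map (starRingEnd ℂ) =
      symplecticBlocks fun i => (d i : ℂ) := by
  rw [symplecticBlocks, blockDiagonal_map _ _ (map_zero _)]
  congr 1
  ext i s t
  fin_cases s <;> fin_cases t <;> simp [symplecticUnit]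

theorem symplecticBlocks_eq_zero_iff {a : ι → ℂ} : symplecticBlocks a = 0 ↔ a = 0 := by
  rw [symplecticBlocks, ← blockDiagonal_zero, blockDiagonal_inj, funext_iff, funext_iff]
  have hne : symplecticUnit ≠ 0 := fun h => by simpa [symplecticUnit] using congrFun₂ h 0 1
  simp [hne]

theorem eq_symplecticBlocks {A : Matrix (Fin 2 × ι) (Fin 2 × ι) ℂ} (hA : Aᵀ = -A)
    (hblock : blockDiagonal (blockDiag A) = A) :
    A = symplecticBlocks fun i => A (0, i) (1, i) := by
  have hdiag (i : ι) : blockDiag A i = A (0, i) (1, i) • symplecticUnit :=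
    eq_smul_symplecticUnit (by rw [← blockDiag_transpose, hA, blockDiag_neg, Pi.neg_apply])
  exact hblock.symm.trans (congrArg blockDiagonal (funext hdiag))

variable [Fintype ι]

theorem symplecticBlocks_mul_self (a : ι → ℂ) :
    symplecticBlocks a * symplecticBlocks a = diagonal fun q => -a q.2 ^ 2 := by
  rw [symplecticBlocks, ← blockDiagonal_mul, ← blockDiagonal_diagonal fun i _ => -a i ^ 2]
  congr 1
  ext1 i
  rw [smul_mul_smul_comm, symplecticUnit_mul_self, ← pow_two, smul_neg, smul_one_eq_diagonal,
    diagonal_neg]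

theorem congrAction_symplecticBlocks (a : ι → ℂ) (Y : ι → Matrix (Fin 2) (Fin 2) ℂ) :
    congrAction (symplecticBlocks a) (blockDiagonal Y) =
      symplecticBlocks fun i => a i * (Y i).trace := by
  rw [congrAction_apply, symplecticBlocks, symplecticBlocks, blockDiagonal_transpose,
    ← blockDiagonal_mul, ← blockDiagonal_mul, ← blockDiagonal_add]
  congr 1
  ext1 i
  rw [mul_smul, ← congrAction_symplecticUnit, congrAction_apply, smul_add, Pi.add_apply,
    Matrix.mul_smul, Matrix.smul_mul]

theorem blockDiagonal_blockDiag_of_mul_eq_mul_map_conj {d : ι → ℝ}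
    (hd : Function.Injective fun i => d i ^ 2) {Y : Matrix (Fin 2 × ι) (Fin 2 × ι) ℂ}
    (hY : Y * symplecticBlocks (fun i => (d i : ℂ)) =
      symplecticBlocks (fun i => (d i : ℂ)) * Y.map (starRingEnd ℂ)) :
    blockDiagonal (blockDiag Y) = Y := by
  have hcomm := commute_mul_self_of_mul_eq_mul_map_conj (map_conj_symplecticBlocks_ofReal d) hY
  rw [symplecticBlocks_mul_self] at hcomm
  ext ⟨s, i⟩ ⟨t, j⟩
  by_cases hij : i = j
  · rw [hij, blockDiagonal_apply_eq, blockDiag_apply]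
  · rw [blockDiagonal_apply_ne _ _ _ hij]
    refine (apply_eq_zero_of_commute_diagonal hcomm fun h => hij (hd ?_)).symm
    exact_mod_cast neg_inj.mp h

theorem exists_injective_sq_and_forall_ne_zero (ι : Type*) [Finite ι] :
    ∃ d : ι → ℝ, (Function.Injective fun i => d i ^ 2) ∧ ∀ i, d i ≠ 0 := by
  refine ⟨fun i => (Finite.equivFin ι i : ℕ) + 1, fun i j hij => ?_, fun i => by positivity⟩
  have hval : (Finite.equivFin ι i : ℕ) = Finite.equivFin ι j := by
    have := (pow_left_inj₀ (by positivity) (by positivity) two_ne_zero).mp hij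
    exact_mod_cast add_right_cancel this
  exact (Finite.equivFin ι).injective (Fin.ext hval)

theorem exists_mem_unitaryGroup_conj_eq_symplecticBlocks
    {A : Matrix (Fin 2 × ι) (Fin 2 × ι) ℂ} (hA : Aᵀ = -A) :
    ∃ U ∈ unitaryGroup (Fin 2 × ι) ℂ, ∃ a : ι → ℂ, U * A * Uᵀ = symplecticBlocks a := by
  obtain ⟨d, hd, -⟩ := exists_injective_sq_and_forall_ne_zero ι
  set D := symplecticBlocks fun i => (d i : ℂ)
  obtain ⟨U, hU, hmax⟩ := exists_isMaxOn_re_trace_mul_conj D A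
  have halt : (U * A * Uᵀ)ᵀ = -(U * A * Uᵀ) := by
    simp only [transpose_mul, transpose_transpose, hA, Matrix.neg_mul, Matrix.mul_neg,
      Matrix.mul_assoc]
  have hmax_one :
      IsMaxOn (fun V => (trace (D * (V * (U * A * Uᵀ) * Vᵀ))).re)
        (unitaryGroup (Fin 2 × ι) ℂ) 1 := by
    intro V hV
    simpa [transpose_mul, Matrix.mul_assoc] using hmax (mul_mem hV hU)
  have hherm := isHermitian_mul_of_isMaxOn (transpose_symplecticBlocks _) halt hmax_one
  refine ⟨U, hU, _, eq_symplecticBlocks halt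
    (blockDiagonal_blockDiag_of_mul_eq_mul_map_conj hd ?_)⟩
  exact mul_eq_mul_map_conj_of_isHermitian_mul (transpose_symplecticBlocks _)
    (map_conj_symplecticBlocks_ofReal d) halt hherm

end SymplecticBlocks

section Stabilizer

variable {ι : Type*} [DecidableEq ι]

variable (ι) in
/-- The embedding of `𝔰𝔲(2)^ι` in `𝔰𝔲(2 × ι)` as block-diagonal matrices. -/
noncomputable def suBlocks : (ι → su (Fin 2)) →ₗ[ℝ] Matrix (Fin 2 × ι) (Fin 2 × ι) ℂ where
  toFun Y := blockDiagonal fun i => (Y i : Matrix (Fin 2) (Fin 2) ℂ)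
  map_add' Y Z := blockDiagonal_add (fun i => (Y i : Matrix (Fin 2) (Fin 2) ℂ)) fun i => Z i
  map_smul' c Y := blockDiagonal_smul c fun i => (Y i : Matrix (Fin 2) (Fin 2) ℂ)

theorem suBlocks_apply (Y : ι → su (Fin 2)) :
    suBlocks ι Y = blockDiagonal fun i => (Y i : Matrix (Fin 2) (Fin 2) ℂ) := rfl

variable [Fintype ι]

theorem finrank_range_suBlocks :
    Module.finrank ℝ (suBlocks ι).range = 3 * Fintype.card ι := by
  have suBlocks_injective : Function.Injective (suBlocks ι) := by
    intro Y Z hYZ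
    rw [suBlocks_apply, suBlocks_apply, blockDiagonal_inj] at hYZ
    exact funext fun i => Subtype.ext (congrFun hYZ i)
  have finrank_su_two : Module.finrank ℝ (su (Fin 2)) = 3 := by
    simpa using finrank_su_add_one (n := Fin 2)
  rw [LinearMap.finrank_range_of_inj suBlocks_injective, Module.finrank_pi_fintype]
  simp [finrank_su_two, mul_comm]

theorem range_suBlocks_le_congrStabilizer (a : ι → ℂ) :
    (suBlocks ι).range ≤ congrStabilizer (symplecticBlocks a) := by
  rintro _ ⟨Y, rfl⟩
  have hskew (i : ι) : (Y i : Matrix (Fin 2) (Fin 2) ℂ)ᴴ = -Y i := (mem_su.mp (Y i).2).1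
  have htrace (i : ι) : (Y i : Matrix (Fin 2) (Fin 2) ℂ).trace = 0 := (mem_su.mp (Y i).2).2
  refine mem_congrStabilizer.mpr ⟨mem_su.mpr ⟨?_, ?_⟩, ?_⟩
  · refine (blockDiagonal_conjTranspose _).trans ?_
    simp only [hskew]
    exact blockDiagonal_neg _
  · exact (trace_blockDiagonal _).trans (Finset.sum_eq_zero fun i _ => htrace i)
  · refine (congrAction_symplecticBlocks a _).trans (symplecticBlocks_eq_zero_iff.mpr ?_)
    simp only [htrace, mul_zero]
    rfl

theorem congrStabilizer_symplecticBlocks_le {d : ι → ℝ}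
    (hd : Function.Injective fun i => d i ^ 2) (hd₀ : ∀ i, d i ≠ 0) :
    congrStabilizer (symplecticBlocks fun i => (d i : ℂ)) ≤ (suBlocks ι).range := by
  intro X hX
  obtain ⟨hsu, hact⟩ := mem_congrStabilizer.mp hX
  have hskew : Xᴴ = -X := (mem_su.mp hsu).1
  have hblock : blockDiagonal (blockDiag X) = X := by
    refine blockDiagonal_blockDiag_of_mul_eq_mul_map_conj hd ?_
    have hconj : X.map (starRingEnd ℂ) = -Xᵀ := congrArg transpose hskew
    rw [congrAction_apply] at hact
    rw [hconj, Matrix.mul_neg, eq_neg_of_add_eq_zero_left hact]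
  have htrace (i : ι) : (blockDiag X i).trace = 0 := by
    rw [← hblock, congrAction_symplecticBlocks, symplecticBlocks_eq_zero_iff] at hact
    simpa [hd₀ i] using congrFun hact i
  refine ⟨fun i => ⟨blockDiag X i, mem_su.mpr ⟨?_, htrace i⟩⟩, hblock⟩
  rw [← blockDiag_conjTranspose, hskew, blockDiag_neg, Pi.neg_apply]

end Stabilizer

section MinimalStabilizer

variable {ι n : Type*} [Fintype ι] [Fintype n]

theorem three_mul_card_le_finrank_congrStabilizer (e : Fin 2 × ι ≃ n) {A : Matrix n n ℂ}
    (hA : Aᵀ = -A) : 3 * Fintype.card ι ≤ Module.finrank ℝ (congrStabilizer A) := by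
  classical
  have halt : (A.submatrix e e)ᵀ = -A.submatrix e e := by rw [transpose_submatrix, hA]; rfl
  obtain ⟨U, hU, a, ha⟩ := exists_mem_unitaryGroup_conj_eq_symplecticBlocks halt
  calc 3 * Fintype.card ι = Module.finrank ℝ (suBlocks ι).range := finrank_range_suBlocks.symm
    _ ≤ Module.finrank ℝ (congrStabilizer (symplecticBlocks a)) :=
      Submodule.finrank_mono (range_suBlocks_le_congrStabilizer a)
    _ ≤ Module.finrank ℝ (congrStabilizer (A.submatrix e e)) :=
      ha ▸ finrank_congrStabilizer_conj_le (mem_unitaryGroup_iff'.mp hU)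
        (mem_unitaryGroup_iff.mp hU) _
    _ ≤ Module.finrank ℝ (congrStabilizer A) := finrank_congrStabilizer_submatrix_le A e

theorem exists_finrank_congrStabilizer_eq (e : Fin 2 × ι ≃ n) :
    ∃ A : Matrix n n ℂ, Aᵀ = -A ∧
      Module.finrank ℝ (congrStabilizer A) = 3 * Fintype.card ι := by
  classical
  obtain ⟨d, hd, hd₀⟩ := exists_injective_sq_and_forall_ne_zero ι
  have halt : ((symplecticBlocks fun i => (d i : ℂ)).submatrix e.symm e.symm)ᵀ =
      -(symplecticBlocks fun i => (d i : ℂ)).submatrix e.symm e.symm := by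
    rw [transpose_submatrix, transpose_symplecticBlocks]; rfl
  refine ⟨_, halt, (three_mul_card_le_finrank_congrStabilizer e halt).antisymm' ?_⟩
  calc _ ≤ Module.finrank ℝ (congrStabilizer (symplecticBlocks fun i => (d i : ℂ))) :=
        finrank_congrStabilizer_submatrix_le _ e.symm
    _ ≤ Module.finrank ℝ (suBlocks ι).range :=
      Submodule.finrank_mono (congrStabilizer_symplecticBlocks_le hd hd₀)
    _ = 3 * Fintype.card ι := finrank_range_suBlocks

end MinimalStabilizer

theorem finrank_span_stabSet19 {m : ℕ} (A : Matrix (Fin (2 * m)) (Fin (2 * m)) ℂ) :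
    Module.finrank ℝ (Submodule.span ℝ (stabSet19 A)) =
      Module.finrank ℝ (congrStabilizer A) := by
  have : stabSet19 A = congrStabilizer A :=
    Set.ext fun _ => ⟨fun ⟨hs, ht, h⟩ => ⟨⟨hs, ht⟩, h⟩, fun ⟨⟨hs, ht⟩, h⟩ => ⟨hs, ht, h⟩⟩
  rw [this, Submodule.span_eq]

theorem finrank_span_tangSet19 {m : ℕ} (A : Matrix (Fin (2 * m)) (Fin (2 * m)) ℂ) :
    Module.finrank ℝ (Submodule.span ℝ (tangSet19 A)) =
      Module.finrank ℝ (congrTangent A) := by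
  have : tangSet19 A = congrTangent A :=
    Set.ext fun _ => ⟨fun ⟨X, hs, ht, h⟩ => ⟨X, ⟨hs, ht⟩, h.symm⟩,
      fun ⟨X, ⟨hs, ht⟩, h⟩ => ⟨X, hs, ht, h.symm⟩⟩
  rw [this, Submodule.span_eq]

theorem stmt19 (m : ℕ) (hm : 2 ≤ m) :
    IsLeast {d : ℕ | ∃ A : Matrix (Fin (2 * m)) (Fin (2 * m)) ℂ, Aᵀ = -A ∧
        d = Module.finrank ℝ (Submodule.span ℝ (stabSet19 A))}
      (3 * m) ∧
    IsGreatest {d : ℕ | ∃ A : Matrix (Fin (2 * m)) (Fin (2 * m)) ℂ, Aᵀ = -A ∧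
        d = Module.finrank ℝ (Submodule.span ℝ (tangSet19 A))}
      (2 * m * (2 * m - 1) - (m + 1)) := by
  have : Nonempty (Fin (2 * m)) := ⟨⟨0, by omega⟩⟩
  have hcard : (2 * m) ^ 2 = 2 * m * (2 * m - 1) + 2 * m := by
    rw [pow_two, Nat.mul_sub_one, Nat.sub_add_cancel (Nat.le_mul_self _)]
  have hlower {A : Matrix (Fin (2 * m)) (Fin (2 * m)) ℂ} (hA : Aᵀ = -A) :
      3 * m ≤ Module.finrank ℝ (congrStabilizer A) := by
    simpa using three_mul_card_le_finrank_congrStabilizer finProdFinEquiv hA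
  have hsum (A : Matrix (Fin (2 * m)) (Fin (2 * m)) ℂ) := Fintype.card_fin (2 * m) ▸
    finrank_congrTangent_add_finrank_congrStabilizer A
  obtain ⟨A₀, hA₀, hmin⟩ := exists_finrank_congrStabilizer_eq (finProdFinEquiv (m := 2) (n := m))
  rw [Fintype.card_fin] at hmin
  simp only [finrank_span_stabSet19, finrank_span_tangSet19]
  refine ⟨⟨⟨A₀, hA₀, hmin.symm⟩, ?_⟩, ⟨A₀, hA₀, ?_⟩, ?_⟩
  · rintro _ ⟨A, hA, rfl⟩
    exact hlower hA
  · have := hsum A₀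
    omega
  · rintro _ ⟨A, hA, rfl⟩
    have := hsum A
    have := hlower hA
    omega
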